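/- Let r ≥ 3 and let A = (ZMod 4)^{r−1} × (ZMod 2). Then there exists a reversible identity-free subset D' of the generalized dihedral group G = Dih(A) such that the Cayley graph Cay(G, D') is a proper divisible design graph with parameters v = 2^{2r}, k = 2^{2r} − 2^r − 2^{r−1}, λ1 = 2^{2r} − 2^{r+1} − 2^{r−1}, λ2 = 2(2^r−1)(2^{r−1}−1), m = 2^{r+1}, n = 2^{r−1}. -/

import Mathlib

open Classical

/-!
A subset `D` of `G` in which the number of `x ∈ D` with `x * g ∈ D` depends only on whether `g` lies
in a subgroup `N` yields a divisible design graph whose classes are the right cosets of `N`, and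
complementation preserves this property of `D`.

Let `R` be a transversal of `N` in `A` such that every `g ∉ N` has exactly two representations as a
quotient of elements of `R`, and no `1 ≠ g ∈ N` has any. Then `N ∪ R b` is such a subset of
`Dih(A)`: for `g ∈ A` all quotients come from one of the two halves, while for `g ∈ A b` each half
contributes exactly one because `R` meets every coset of `N` once.

For a field `K` and an additive surjection `β : K → V`, the central extension of `K` by `V` with
cocycle `β (x x')` has such a transversal, namely `K × {0}`, if `|ker β| = 2`: quotients equal to
`(u, v)` with `u ≠ 0` correspond to solutions of `β (x u) = -v`. For `K = 𝔽_{2^r}` and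
`ker β = {0, 1}`, this extension is isomorphic to `(ℤ/4)^{r-1} × ℤ/2`.
-/

section DivisibleDifferenceSet

variable {G : Type*} [Group G]

/-- A divisible difference set relative to the subgroup `N`: the number of representations of
`g ≠ 1` as a quotient `x⁻¹ * y` with `x, y ∈ D` is `l₁` on `N` and `l₂` off `N`. The case `l₁ = 0`
is that of a relative difference set. The size of `D` is not part of the definition. -/
structure IsDivisibleDifferenceSet (N : Subgroup G) (D : Set G) (l₁ l₂ : ℕ) : Prop where
  ncard_of_mem : ∀ g ∈ N, g ≠ 1 → {x ∈ D | x * g ∈ D}.ncard = l₁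
  ncard_of_notMem : ∀ g ∉ N, {x ∈ D | x * g ∈ D}.ncard = l₂

lemma ncard_mul_mem (D : Set G) (g : G) : {x | x * g ∈ D}.ncard = D.ncard :=
  Set.ncard_preimage_of_injective_subset_range (mul_left_injective g)
    fun y _ => ⟨y * g⁻¹, inv_mul_cancel_right y g⟩

lemma ncard_compl_quotients [Finite G] (D : Set G) (g : G) :
    {x ∈ Dᶜ | x * g ∈ Dᶜ}.ncard = Nat.card G + {x ∈ D | x * g ∈ D}.ncard - 2 * D.ncard := by
  have h_compl : {x ∈ Dᶜ | x * g ∈ Dᶜ} = (D ∪ {x | x * g ∈ D})ᶜ := by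
    ext x
    simp
  have h_inter : {x ∈ D | x * g ∈ D} = D ∩ {x | x * g ∈ D} := rfl
  have h_union := Set.ncard_union_add_ncard_inter D {x | x * g ∈ D}
  have h_total := Set.ncard_add_ncard_compl (D ∪ {x | x * g ∈ D})
  rw [ncard_mul_mem] at h_union
  rw [h_compl, h_inter]
  omega

lemma IsDivisibleDifferenceSet.compl [Finite G] {N : Subgroup G} {D : Set G} {l₁ l₂ : ℕ}
    (hD : IsDivisibleDifferenceSet N D l₁ l₂) :
    IsDivisibleDifferenceSet N Dᶜ (Nat.card G + l₁ - 2 * D.ncard)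
      (Nat.card G + l₂ - 2 * D.ncard) where
  ncard_of_mem g hg hg1 := by rw [ncard_compl_quotients, hD.ncard_of_mem g hg hg1]
  ncard_of_notMem g hg := by rw [ncard_compl_quotients, hD.ncard_of_notMem g hg]

lemma card_common_neighbors (D : Set G) (g h : G) :
    Nat.card {x : G // x * g⁻¹ ∈ D ∧ x * h⁻¹ ∈ D} = {x ∈ D | x * (g * h⁻¹) ∈ D}.ncard := by
  have h_translate : {x | x * g⁻¹ ∈ {x ∈ D | x * (g * h⁻¹) ∈ D}} =
      {x | x * g⁻¹ ∈ D ∧ x * h⁻¹ ∈ D} := by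
    ext x
    simp [mul_assoc]
  rw [← ncard_mul_mem _ g⁻¹, h_translate]
  rfl

lemma exists_rightCoset_labelling (N : Subgroup G) [N.FiniteIndex] {m : ℕ} (hm : N.index = m) :
    ∃ C : G → Fin m, (∀ g h, C g = C h ↔ g * h⁻¹ ∈ N) ∧
      ∀ j, Nat.card {g : G // C g = j} = Nat.card N := by
  let e : Quotient (QuotientGroup.rightRel N) ≃ Fin m :=
    (QuotientGroup.quotientRightRelEquivQuotientLeftRel N).trans (Finite.equivFinOfCardEq hm)
  let C : G → Fin m := fun g => e (Quotient.mk _ g)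
  have hC : ∀ g h, C g = C h ↔ g * h⁻¹ ∈ N := fun g h => by
    rw [e.apply_eq_iff_eq, eq_comm, Quotient.eq, QuotientGroup.rightRel_apply]
  refine ⟨C, hC, fun j => ?_⟩
  obtain ⟨g, rfl⟩ : ∃ g, C g = j := (e.surjective.comp Quotient.mk_surjective) j
  simp only [hC]
  exact ncard_mul_mem (N : Set G) g⁻¹

/-- `Cay(G, D)` is a divisible design graph with `m` classes of size `n` and parameters `k`, `l₁`,
`l₂`, not necessarily proper. The partition into classes is given by the labelling `C`. -/
structure IsDivisibleDesignCayley {m : ℕ} (D : Set G) (C : G → Fin m) (n k l₁ l₂ : ℕ) : Prop where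
  inv_eq : D⁻¹ = D
  one_notMem : 1 ∉ D
  card_class : ∀ j, Nat.card {g : G // C g = j} = n
  card_neighbors : ∀ g, Nat.card {x : G // x * g⁻¹ ∈ D} = k
  card_common_of_eq : ∀ g h, g ≠ h → C g = C h →
    Nat.card {x : G // x * g⁻¹ ∈ D ∧ x * h⁻¹ ∈ D} = l₁
  card_common_of_ne : ∀ g h, C g ≠ C h →
    Nat.card {x : G // x * g⁻¹ ∈ D ∧ x * h⁻¹ ∈ D} = l₂

theorem IsDivisibleDifferenceSet.exists_isDivisibleDesignCayley {N : Subgroup G} [N.FiniteIndex]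
    {D : Set G} {l₁ l₂ m : ℕ} (hD : IsDivisibleDifferenceSet N D l₁ l₂) (h_inv : D⁻¹ = D)
    (h_one : 1 ∉ D) (hm : N.index = m) :
    ∃ C : G → Fin m, IsDivisibleDesignCayley D C (Nat.card N) D.ncard l₁ l₂ := by
  obtain ⟨C, hC, hcard⟩ := exists_rightCoset_labelling N hm
  refine ⟨C, h_inv, h_one, hcard, fun g => ncard_mul_mem D g⁻¹, fun g h hgh hgC => ?_,
    fun g h hgC => ?_⟩
  · rw [card_common_neighbors,
      hD.ncard_of_mem _ ((hC g h).1 hgC) (mul_inv_eq_one.not.2 hgh)]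
  · rw [card_common_neighbors, hD.ncard_of_notMem _ ((hC g h).not.1 hgC)]

end DivisibleDifferenceSet

section GeneralizedDihedral

variable {A G : Type*} [Group A] [Group G]

/-- `G` is the generalized dihedral group of `A`, where `ι` embeds `A` and `b` is the involution
outside `A` that acts on it by inversion. Commutativity of `A` is a consequence. -/
structure IsGeneralizedDihedral (ι : A →* G) (b : G) : Prop where
  injective : Function.Injective ι
  mul_self : b * b = 1
  conj : ∀ a, b * ι a * b⁻¹ = ι a⁻¹
  notMem_range : b ∉ Set.range ι
  decomp : ∀ g, (∃ a, g = ι a) ∨ ∃ a, g = ι a * b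

/-- The subset `P ∪ Q b` of the generalized dihedral group of `A`. -/
def dihedralSet (ι : A →* G) (b : G) (P Q : Set A) : Set G :=
  ι '' P ∪ (fun a => ι a * b) '' Q

namespace IsGeneralizedDihedral

variable {ι : A →* G} {b : G} (h : IsGeneralizedDihedral ι b)
include h

lemma comp_mulEquiv {B : Type*} [Group B] (e : B ≃* A) :
    IsGeneralizedDihedral (ι.comp e.toMonoidHom) b where
  injective := h.injective.comp e.injective
  mul_self := h.mul_self
  conj a := by simpa using h.conj (e a)
  notMem_range := fun ⟨a, ha⟩ => h.notMem_range ⟨e a, ha⟩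
  decomp g := (h.decomp g).imp (fun ⟨a, ha⟩ => ⟨e.symm a, by simpa using ha⟩)
    fun ⟨a, ha⟩ => ⟨e.symm a, by simpa using ha⟩

lemma mul_map (a : A) : b * ι a = ι a⁻¹ * b := by
  rw [← h.conj, inv_mul_cancel_right]

lemma map_ne_map_mul (a c : A) : ι a ≠ ι c * b := fun hac =>
  h.notMem_range ⟨c⁻¹ * a, by rw [map_mul, hac, map_inv, inv_mul_cancel_left]⟩

lemma map_mem_dihedralSet {P Q : Set A} {a : A} : ι a ∈ dihedralSet ι b P Q ↔ a ∈ P := by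
  simp [dihedralSet, h.injective.eq_iff, (h.map_ne_map_mul _ _).symm]

lemma map_mul_mem_dihedralSet {P Q : Set A} {a : A} :
    ι a * b ∈ dihedralSet ι b P Q ↔ a ∈ Q := by
  simp [dihedralSet, h.injective.eq_iff, h.map_ne_map_mul]

lemma ncard_dihedralSet [Finite A] (P Q : Set A) :
    (dihedralSet ι b P Q).ncard = P.ncard + Q.ncard := by
  have h_disjoint : Disjoint (ι '' P) ((fun a => ι a * b) '' Q) :=
    Set.disjoint_image_image fun a _ c _ => h.map_ne_map_mul a c
  have h_injective : Function.Injective fun a => ι a * b :=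
    (mul_left_injective b).comp h.injective
  rw [dihedralSet, Set.ncard_union_eq h_disjoint, Set.ncard_image_of_injective _ h.injective,
    Set.ncard_image_of_injective _ h_injective]

lemma dihedralSet_univ : dihedralSet ι b Set.univ Set.univ = Set.univ :=
  Set.eq_univ_of_forall fun g => by
    rcases h.decomp g with ⟨a, rfl⟩ | ⟨a, rfl⟩
    · exact h.map_mem_dihedralSet.2 (Set.mem_univ a)
    · exact h.map_mul_mem_dihedralSet.2 (Set.mem_univ a)

lemma finite [Finite A] : Finite G :=
  Set.finite_univ_iff.1 (h.dihedralSet_univ ▸ (Set.toFinite _).union (Set.toFinite _))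

lemma card_eq [Finite A] : Nat.card G = 2 * Nat.card A := by
  rw [← Set.ncard_univ, ← h.dihedralSet_univ, h.ncard_dihedralSet, Set.ncard_univ, two_mul]

lemma card_map (N : Subgroup A) : Nat.card (N.map ι) = Nat.card N :=
  (Nat.card_congr (N.equivMapOfInjective ι h.injective).toEquiv).symm

lemma index_map [Finite A] (N : Subgroup A) : (N.map ι).index = 2 * N.index := by
  refine Nat.eq_of_mul_eq_mul_left (Nat.card_pos (α := N)) ?_
  calc Nat.card N * (N.map ι).index = Nat.card G := by rw [← h.card_map, Subgroup.card_mul_index]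
    _ = Nat.card N * (2 * N.index) := by rw [h.card_eq, ← N.card_mul_index, mul_left_comm]

lemma inv_dihedralSet (P Q : Set A) : (dihedralSet ι b P Q)⁻¹ = dihedralSet ι b P⁻¹ Q := by
  have hb : b⁻¹ = b := inv_eq_of_mul_eq_one_left h.mul_self
  ext g
  rcases h.decomp g with ⟨a, rfl⟩ | ⟨a, rfl⟩
  · rw [Set.mem_inv, ← map_inv, h.map_mem_dihedralSet, h.map_mem_dihedralSet, Set.mem_inv]
  · rw [Set.mem_inv, mul_inv_rev, hb, ← map_inv, h.mul_map, inv_inv, h.map_mul_mem_dihedralSet,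
      h.map_mul_mem_dihedralSet]

lemma quotients_map (P Q : Set A) (a : A) :
    {x ∈ dihedralSet ι b P Q | x * ι a ∈ dihedralSet ι b P Q} =
      dihedralSet ι b {x ∈ P | x * a ∈ P} {x ∈ Q | x * a⁻¹ ∈ Q} := by
  ext g
  rcases h.decomp g with ⟨c, rfl⟩ | ⟨c, rfl⟩
  · simp only [Set.mem_ofPred_eq, ← map_mul, h.map_mem_dihedralSet]
  · simp only [Set.mem_ofPred_eq, mul_assoc, h.mul_map, h.map_mul_mem_dihedralSet]
    simp only [← mul_assoc, ← map_mul, h.map_mul_mem_dihedralSet]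

lemma quotients_map_mul (P Q : Set A) (a : A) :
    {x ∈ dihedralSet ι b P Q | x * (ι a * b) ∈ dihedralSet ι b P Q} =
      dihedralSet ι b {x ∈ P | x * a ∈ Q} {x ∈ Q | x * a⁻¹ ∈ P} := by
  ext g
  rcases h.decomp g with ⟨c, rfl⟩ | ⟨c, rfl⟩
  · simp only [Set.mem_ofPred_eq, ← mul_assoc, ← map_mul, h.map_mem_dihedralSet,
      h.map_mul_mem_dihedralSet]
  · have h_mul : ι c * b * (ι a * b) = ι (c * a⁻¹) := by
      rw [mul_assoc, ← mul_assoc b, h.mul_map, mul_assoc, h.mul_self, mul_one, map_mul]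
    simp only [Set.mem_ofPred_eq, h_mul, h.map_mem_dihedralSet, h.map_mul_mem_dihedralSet]

end IsGeneralizedDihedral

lemma ncard_inter_rightCoset {N : Subgroup A} {R : Set A}
    (hNR : Subgroup.IsComplement (N : Set A) R) (a : A) :
    {x ∈ R | x * a⁻¹ ∈ (N : Set A)}.ncard = 1 := by
  obtain ⟨⟨r, hr⟩, hra, h_unique⟩ := Subgroup.isComplement_iff_existsUnique_mul_inv_mem.1 hNR a
  refine Set.ncard_eq_one.2 ⟨r, Set.eq_singleton_iff_unique_mem.2 ⟨⟨hr, ?_⟩, fun x hx => ?_⟩⟩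
  · simpa using N.inv_mem hra
  · exact congrArg Subtype.val (h_unique ⟨x, hx.1⟩ (by simpa using N.inv_mem hx.2))

lemma ncard_mul_mem_transversal {N : Subgroup A} {R : Set A}
    (hNR : Subgroup.IsComplement (N : Set A) R) (a : A) :
    {x ∈ (N : Set A) | x * a ∈ R}.ncard = 1 := by
  rw [← ncard_inter_rightCoset hNR a, ← ncard_mul_mem {x ∈ R | x * a⁻¹ ∈ (N : Set A)} a]
  simp [and_comm]

theorem IsGeneralizedDihedral.isDivisibleDifferenceSet [Finite A] {ι : A →* G} {b : G}
    (h : IsGeneralizedDihedral ι b) {N : Subgroup A} {R : Set A}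
    (hR : IsDivisibleDifferenceSet N R 0 2) (hNR : Subgroup.IsComplement (N : Set A) R) :
    IsDivisibleDifferenceSet (N.map ι) (dihedralSet ι b N R) (Nat.card N) 2 where
  ncard_of_mem := by
    rintro _ ⟨a, haN, rfl⟩ ha1
    have h_N : {x ∈ (N : Set A) | x * a ∈ (N : Set A)} = N :=
      Set.ext fun x => and_iff_left_of_imp fun hx => N.mul_mem hx haN
    rw [h.quotients_map, h.ncard_dihedralSet, h_N,
      hR.ncard_of_mem a⁻¹ (N.inv_mem haN) (inv_ne_one.2 fun ha => ha1 (by rw [ha, map_one])),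
      add_zero, ← Nat.card_coe_set_eq]
    rfl
  ncard_of_notMem g hg := by
    rcases h.decomp g with ⟨a, rfl⟩ | ⟨a, rfl⟩
    · have haN : a ∉ N := fun ha => hg ⟨a, ha, rfl⟩
      have h_N : {x ∈ (N : Set A) | x * a ∈ (N : Set A)} = ∅ :=
        Set.eq_empty_of_forall_notMem fun x hx => haN ((N.mul_mem_cancel_left hx.1).1 hx.2)
      rw [h.quotients_map, h.ncard_dihedralSet, h_N, Set.ncard_empty, zero_add,
        hR.ncard_of_notMem a⁻¹ (N.inv_mem_iff.not.2 haN)]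
    · rw [h.quotients_map_mul, h.ncard_dihedralSet, ncard_mul_mem_transversal hNR,
        ncard_inter_rightCoset hNR]

lemma four_mul_sq_add_two_sub {n : ℕ} (hn : 1 ≤ n) :
    4 * n ^ 2 + 2 - 6 * n = 2 * (2 * n - 1) * (n - 1) := by
  obtain ⟨t, rfl⟩ := Nat.exists_eq_add_of_le hn
  rw [show 2 * (1 + t) - 1 = 2 * t + 1 by omega, Nat.add_sub_cancel_left]
  refine Nat.sub_eq_of_eq_add ?_
  ring

theorem IsGeneralizedDihedral.exists_isDivisibleDesignCayley [Finite A] {ι : A →* G} {b : G}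
    (h : IsGeneralizedDihedral ι b) {N : Subgroup A} {R : Set A}
    (hR : IsDivisibleDifferenceSet N R 0 2) (hNR : Subgroup.IsComplement (N : Set A) R) {n : ℕ}
    (hN : Nat.card N = n) (h_index : N.index = 2 * n) :
    ∃ (D : Set G) (C : G → Fin (4 * n)), IsDivisibleDesignCayley D C n (4 * n ^ 2 - 3 * n)
      (4 * n ^ 2 - 5 * n) (2 * (2 * n - 1) * (n - 1)) := by
  have : Finite G := h.finite
  have hn : 1 ≤ n := hN ▸ Nat.card_pos
  have h_one : 1 ∈ dihedralSet ι b N R := map_one ι ▸ h.map_mem_dihedralSet.2 N.one_mem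
  have h_inv : (dihedralSet ι b N R)⁻¹ = dihedralSet ι b N R := by
    rw [h.inv_dihedralSet, inv_coe_set]
  have h_G : Nat.card G = 4 * n ^ 2 := by
    rw [h.card_eq, ← N.card_mul_index, hN, h_index]
    ring
  have h_E : (dihedralSet ι b N R).ncard = 3 * n := by
    rw [h.ncard_dihedralSet, hNR.ncard_right, h_index, ← Nat.card_coe_set_eq, SetLike.coe_sort_coe,
      hN]
    ring
  have h_index_map : (N.map ι).index = 4 * n := by
    rw [h.index_map, h_index]
    ring
  obtain ⟨C, hC⟩ := (h.isDivisibleDifferenceSet hR hNR).compl.exists_isDivisibleDesignCayley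
    (by rw [Set.compl_inv, h_inv]) (Set.notMem_compl_iff.2 h_one) h_index_map
  have h_l₁ : 4 * n ^ 2 + n - 2 * (3 * n) = 4 * n ^ 2 - 5 * n := by omega
  have h_l₂ : 4 * n ^ 2 + 2 - 2 * (3 * n) = 2 * (2 * n - 1) * (n - 1) := by
    rw [← four_mul_sq_add_two_sub hn]
    omega
  rw [h.card_map, Set.ncard_compl, h_G, h_E, hN, h_l₁, h_l₂] at hC
  exact ⟨_, C, hC⟩

end GeneralizedDihedral

/-- The central extension of `(K, +)` by `V` with cocycle `(x, x') ↦ β (x * x')`, written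
multiplicatively. -/
@[ext] structure TwistedProduct {K V : Type*} [CommRing K] [AddCommGroup V] (β : K →+ V) where
  fst : K
  snd : V

namespace TwistedProduct

section CommRing

variable {K V : Type*} [CommRing K] [AddCommGroup V] {β : K →+ V}

instance : One (TwistedProduct β) := ⟨⟨0, 0⟩⟩
instance : Mul (TwistedProduct β) :=
  ⟨fun w w' => ⟨w.fst + w'.fst, w.snd + w'.snd + β (w.fst * w'.fst)⟩⟩
instance : Inv (TwistedProduct β) := ⟨fun w => ⟨-w.fst, -w.snd + β (w.fst * w.fst)⟩⟩

@[simp] lemma fst_one : (1 : TwistedProduct β).fst = 0 := rfl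
@[simp] lemma snd_one : (1 : TwistedProduct β).snd = 0 := rfl
@[simp] lemma fst_mul (w w' : TwistedProduct β) : (w * w').fst = w.fst + w'.fst := rfl
@[simp] lemma snd_mul (w w' : TwistedProduct β) :
    (w * w').snd = w.snd + w'.snd + β (w.fst * w'.fst) := rfl
@[simp] lemma fst_inv (w : TwistedProduct β) : w⁻¹.fst = -w.fst := rfl
@[simp] lemma snd_inv (w : TwistedProduct β) : w⁻¹.snd = -w.snd + β (w.fst * w.fst) := rfl

instance : CommGroup (TwistedProduct β) where
  mul_assoc w₁ w₂ w₃ := by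
    ext
    · simp [add_assoc]
    · simp [add_mul, mul_add]
      abel
  one_mul w := by ext <;> simp
  mul_one w := by ext <;> simp
  inv_mul_cancel w := by ext <;> simp
  mul_comm w w' := by ext <;> simp [add_comm, mul_comm]

/-- The pairing identification with `K × V` as a set; it is not a homomorphism. -/
def equivProd (β : K →+ V) : TwistedProduct β ≃ K × V where
  toFun w := (w.fst, w.snd)
  invFun p := ⟨p.1, p.2⟩

instance [Finite K] [Finite V] : Finite (TwistedProduct β) := .of_equiv _ (equivProd β).symm

/-- The central subgroup `{0} × V`. -/
def vertical (β : K →+ V) : Subgroup (TwistedProduct β) where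
  carrier := {w | w.fst = 0}
  one_mem' := rfl
  mul_mem' := by simp +contextual
  inv_mem' := by simp

@[simp] lemma mem_vertical {w : TwistedProduct β} : w ∈ vertical β ↔ w.fst = 0 := Iff.rfl

/-- The transversal `K × {0}` of `vertical β`. -/
def horizontal (β : K →+ V) : Set (TwistedProduct β) := {w | w.snd = 0}

@[simp] lemma mem_horizontal {w : TwistedProduct β} : w ∈ horizontal β ↔ w.snd = 0 := Iff.rfl

lemma card_vertical (β : K →+ V) : Nat.card (vertical β) = Nat.card V :=
  Nat.card_congr
    { toFun := fun w => w.1.snd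
      invFun := fun v => ⟨⟨0, v⟩, rfl⟩
      left_inv := fun w => Subtype.ext (TwistedProduct.ext w.2.symm rfl) }

lemma isComplement_vertical_horizontal (β : K →+ V) :
    Subgroup.IsComplement (vertical β : Set (TwistedProduct β)) (horizontal β) := by
  refine Subgroup.isComplement_iff_existsUnique_mul_inv_mem.2 fun w =>
    ⟨⟨⟨w.fst, 0⟩, rfl⟩, by simp, fun r hr => Subtype.ext (TwistedProduct.ext ?_ r.2)⟩
  exact (sub_eq_zero.1 (by simpa [sub_eq_add_neg] using hr)).symm

lemma index_vertical (β : K →+ V) : (vertical β).index = Nat.card K := by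
  rw [← (isComplement_vertical_horizontal β).card_right]
  exact Nat.card_congr
    { toFun := fun w => w.1.fst
      invFun := fun x => ⟨⟨x, 0⟩, rfl⟩
      left_inv := fun w => Subtype.ext (TwistedProduct.ext rfl w.2.symm) }

/-- The set of first coordinates of a subgroup. -/
def fstImage (H : Subgroup (TwistedProduct β)) : AddSubgroup K where
  carrier := {x | ∃ w ∈ H, w.fst = x}
  zero_mem' := ⟨1, H.one_mem, rfl⟩
  add_mem' := by
    rintro _ _ ⟨w, hw, rfl⟩ ⟨w', hw', rfl⟩
    exact ⟨w * w', mul_mem hw hw', rfl⟩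
  neg_mem' := by
    rintro _ ⟨w, hw, rfl⟩
    exact ⟨w⁻¹, inv_mem hw, rfl⟩

lemma mem_fstImage {H : Subgroup (TwistedProduct β)} {x : K} :
    x ∈ fstImage H ↔ ∃ w ∈ H, w.fst = x := Iff.rfl

end CommRing

lemma quotients_horizontal {K V : Type*} [Field K] [AddCommGroup V] {β : K →+ V}
    {g : TwistedProduct β} (hg : g.fst ≠ 0) :
    {w ∈ horizontal β | w * g ∈ horizontal β} =
      (fun z => ⟨z / g.fst, 0⟩) '' (β ⁻¹' {-g.snd}) := by
  ext w
  simp only [Set.mem_ofPred_eq, mem_horizontal, snd_mul, Set.mem_image, Set.mem_preimage,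
    Set.mem_singleton_iff]
  constructor
  · rintro ⟨hw, hwg⟩
    refine ⟨w.fst * g.fst, ?_, TwistedProduct.ext (mul_div_cancel_right₀ _ hg) hw.symm⟩
    rw [hw, zero_add] at hwg
    exact eq_neg_of_add_eq_zero_right hwg
  · rintro ⟨z, hz, rfl⟩
    simp [div_mul_cancel₀ z hg, hz]

theorem isDivisibleDifferenceSet_horizontal {K V : Type*} [Field K] [AddCommGroup V] {β : K →+ V}
    (hβ : Function.Surjective β) :
    IsDivisibleDifferenceSet (vertical β) (horizontal β) 0 (Nat.card β.ker) where
  ncard_of_mem g hg hg1 := by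
    have h_snd : g.snd ≠ 0 := fun h => hg1 (TwistedProduct.ext hg h)
    have h_empty : {w ∈ horizontal β | w * g ∈ horizontal β} = ∅ := by
      refine Set.eq_empty_of_forall_notMem fun w hw => h_snd ?_
      simpa [mem_vertical.1 hg, mem_horizontal.1 hw.1] using hw.2
    rw [h_empty, Set.ncard_empty]
  ncard_of_notMem g hg := by
    have h_injective : Function.Injective fun z => (⟨z / g.fst, 0⟩ : TwistedProduct β) :=
      fun z z' h => (div_left_inj' hg).1 (congrArg fst h)
    rw [quotients_horizontal hg, Set.ncard_image_of_injective _ h_injective,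
      ← Nat.card_coe_set_eq]
    exact Nat.card_congr (AddMonoidHom.fiberEquivKerOfSurjective hβ _)

section CharTwo

variable {K V : Type*} [CommRing K] [CharP K 2] [AddCommGroup V] {β : K →+ V}

lemma add_self_eq_zero_of_surjective (hβ : Function.Surjective β) (v : V) : v + v = 0 := by
  obtain ⟨z, rfl⟩ := hβ v
  rw [← map_add, CharTwo.add_self_eq_zero, map_zero]

lemma mul_self_eq (hβ : Function.Surjective β) (w : TwistedProduct β) :
    w * w = ⟨0, β (w.fst * w.fst)⟩ := by
  ext
  · exact CharTwo.add_self_eq_zero w.fst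
  · rw [snd_mul, add_self_eq_zero_of_surjective hβ, zero_add]

lemma pow_four_eq_one (hβ : Function.Surjective β) (w : TwistedProduct β) : w ^ 4 = 1 := by
  rw [show 4 = 2 * 2 from rfl, pow_mul, sq, sq, mul_self_eq hβ, mul_self_eq hβ, mul_zero, map_zero]
  rfl

lemma sq_eq_one_of_map_eq_zero (hβ : Function.Surjective β) (hβ1 : β 1 = 0) :
    (⟨1, 0⟩ : TwistedProduct β) ^ 2 = 1 := by
  rw [sq, mul_self_eq hβ, mul_one, hβ1]
  rfl

end CharTwo

-- Squares of elements of `H` already exhaust `{0} × V`, since every element of `K` is a square.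
lemma eq_top_of_fstImage_eq_top {K V : Type*} [Field K] [CharP K 2] [Finite K] [AddCommGroup V]
    {β : K →+ V} (hβ : Function.Surjective β) {H : Subgroup (TwistedProduct β)}
    (hH : fstImage H = ⊤) : H = ⊤ := by
  have h_lift : ∀ x : K, ∃ w ∈ H, w.fst = x := fun x =>
    mem_fstImage.1 (hH.ge (AddSubgroup.mem_top x))
  have h_vertical : ∀ v : V, (⟨0, v⟩ : TwistedProduct β) ∈ H := by
    intro v
    obtain ⟨z, rfl⟩ := hβ v
    obtain ⟨x, rfl⟩ := FiniteField.isSquare_of_char_two (ringChar.eq K 2) z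
    obtain ⟨w, hw, rfl⟩ := h_lift x
    exact mul_self_eq hβ w ▸ H.mul_mem hw hw
  refine (Subgroup.eq_top_iff' H).2 fun w => ?_
  obtain ⟨w', hw', h_fst⟩ := h_lift w.fst
  have h_w : w = w' * ⟨0, w.snd - w'.snd⟩ := by ext <;> simp [h_fst]
  exact h_w ▸ H.mul_mem hw' (h_vertical _)

end TwistedProduct

section Generators

lemma exists_monoidHom_zmod_pi_prod {ι W : Type*} [Finite ι] [DecidableEq ι] [CommGroup W]
    {m n : ℕ} {w : ι → W} (hw : ∀ i, w i ^ m = 1) {u : W} (hu : u ^ n = 1) :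
    ∃ φ : Multiplicative ((ι → ZMod m) × ZMod n) →* W,
      (∀ i, φ (.ofAdd (Pi.single i 1, 0)) = w i) ∧ φ (.ofAdd (0, 1)) = u := by
  cases nonempty_fintype ι
  have h_cyclic : ∀ (k : ℕ) (x : Additive W), k • x = 0 → ∃ f : ZMod k →+ Additive W, f 1 = x :=
    fun k x hx => ⟨ZMod.lift k ⟨zmultiplesHom _ x, by simpa using hx⟩, by
      simpa using ZMod.lift_coe k ⟨zmultiplesHom _ x, by simpa using hx⟩ 1⟩
  choose f hf using fun i => h_cyclic m (.ofMul (w i)) (hw i)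
  obtain ⟨f₀, hf₀⟩ := h_cyclic n (.ofMul u) hu
  let F : (ι → ZMod m) × ZMod n →+ Additive W :=
    AddMonoidHom.coprod (∑ i, (f i).comp (Pi.evalAddMonoidHom _ i)) f₀
  refine ⟨AddMonoidHom.toMultiplicativeLeft F, fun i => ?_, ?_⟩
  · have h_single : F (Pi.single i 1, 0) = .ofMul (w i) := by
      simp only [F, AddMonoidHom.coprod_apply, AddMonoidHom.finsetSum_apply,
        AddMonoidHom.comp_apply, Pi.evalAddMonoidHom_apply, map_zero, add_zero]
      rw [Finset.sum_eq_single i (fun j _ hj => by rw [Pi.single_eq_of_ne hj, map_zero])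
        (fun hi => absurd (Finset.mem_univ i) hi), Pi.single_eq_same, hf]
    exact congrArg Additive.toMul h_single
  · have h_last : F (0, 1) = .ofMul u := by simp [F, hf₀]
    exact congrArg Additive.toMul h_last

lemma addSubgroup_eq_top_of_single_mem {ι : Type*} [Finite ι] [DecidableEq ι] {n : ℕ}
    {P : AddSubgroup (ι → ZMod n)} (hP : ∀ i, Pi.single i 1 ∈ P) : P = ⊤ := by
  cases nonempty_fintype ι
  refine (AddSubgroup.eq_top_iff' P).2 fun v => ?_
  rw [← Finset.univ_sum_single v]
  refine P.sum_mem fun i _ => ?_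
  obtain ⟨k, hk⟩ := ZMod.intCast_surjective (v i)
  have h_zsmul : Pi.single i (v i) = k • (Pi.single i 1 : ι → ZMod n) := by
    rw [← Pi.single_zsmul, zsmul_one, hk]
  exact h_zsmul ▸ P.zsmul_mem (hP i) k

end Generators

section FiniteField

variable {K : Type*} [Field K] {s : ℕ}

lemma exists_surjective_ker_eq_zmultiples_one [Algebra (ZMod 2) K]
    (hK : Module.finrank (ZMod 2) K = s + 1) :
    ∃ β : K →+ (Fin s → ZMod 2), Function.Surjective β ∧ β.ker = AddSubgroup.zmultiples 1 := by
  have : FiniteDimensional (ZMod 2) K := Module.finite_of_finrank_eq_succ hK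
  let S : Submodule (ZMod 2) K := Submodule.span (ZMod 2) {1}
  have h_rank : Module.finrank (ZMod 2) (K ⧸ S) = s := by
    have h_sum := S.finrank_quotient_add_finrank
    rw [finrank_span_singleton one_ne_zero, hK] at h_sum
    omega
  let e := (Module.finBasisOfFinrankEq (ZMod 2) (K ⧸ S) h_rank).equivFun
  refine ⟨(e.toLinearMap.comp S.mkQ).toAddMonoidHom, e.surjective.comp S.mkQ_surjective, ?_⟩
  ext z
  have h_ker : e (S.mkQ z) = 0 ↔ z ∈ S := by simp
  refine h_ker.trans ?_
  rw [Submodule.mem_span_singleton, AddSubgroup.mem_zmultiples_iff,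
    (ZMod.intCast_surjective (n := 2)).exists]
  simp only [Int.cast_smul_eq_zsmul]

variable [CharP K 2] {β : K →+ (Fin s → ZMod 2)}

lemma card_ker_eq_two (hker : β.ker = AddSubgroup.zmultiples 1) : Nat.card β.ker = 2 := by
  rw [hker, Nat.card_zmultiples]
  exact CharP.eq K (CharP.addOrderOf_one K) inferInstance

lemma card_eq_two_pow_succ (hβ : Function.Surjective β) (hker : β.ker = AddSubgroup.zmultiples 1) :
    Nat.card K = 2 ^ (s + 1) := by
  have h_range : β.ker.index = 2 ^ s := by
    rw [AddSubgroup.index_ker, AddMonoidHom.range_eq_top.2 hβ]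
    simp
  rw [← β.ker.card_mul_index, card_ker_eq_two hker, h_range, pow_succ']

theorem TwistedProduct.nonempty_mulEquiv [Finite K] (hβ : Function.Surjective β)
    (hker : β.ker = AddSubgroup.zmultiples 1) :
    Nonempty (TwistedProduct β ≃* Multiplicative ((Fin s → ZMod 4) × ZMod 2)) := by
  have hβ1 : β 1 = 0 := hker.ge (AddSubgroup.mem_zmultiples 1)
  choose e he using fun i => hβ (Pi.single i 1)
  obtain ⟨φ, hφ, hφ1⟩ := exists_monoidHom_zmod_pi_prod (w := fun i => ⟨e i, 0⟩)
    (fun i => pow_four_eq_one hβ _) (sq_eq_one_of_map_eq_zero hβ hβ1)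
  have h_one : 1 ∈ fstImage φ.range := mem_fstImage.2 ⟨⟨1, 0⟩, ⟨_, hφ1⟩, rfl⟩
  have h_ker : β.ker ≤ fstImage φ.range := hker.trans_le (AddSubgroup.zmultiples_le_of_mem h_one)
  have h_map : (fstImage φ.range).map β = ⊤ :=
    addSubgroup_eq_top_of_single_mem fun i =>
      ⟨e i, mem_fstImage.2 ⟨⟨e i, 0⟩, ⟨_, hφ i⟩, rfl⟩, he i⟩
  have h_range : φ.range = ⊤ := eq_top_of_fstImage_eq_top hβ <| by
    rw [← AddSubgroup.comap_map_eq_self h_ker, h_map, AddSubgroup.comap_top]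
  have h_card : Nat.card (Multiplicative ((Fin s → ZMod 4) × ZMod 2)) =
      Nat.card (TwistedProduct β) := by
    rw [Nat.card_congr (equivProd β), Nat.card_prod, card_eq_two_pow_succ hβ hker]
    simp only [Nat.card_eq_fintype_card, Fintype.card_multiplicative, Fintype.card_prod,
      Fintype.card_pi, ZMod.card, Finset.prod_const, Finset.card_univ, Fintype.card_fin]
    rw [show 4 = 2 * 2 from rfl, mul_pow]
    ring
  exact ⟨(MulEquiv.ofBijective φ ((Nat.bijective_iff_surjective_and_card φ).2
    ⟨MonoidHom.range_eq_top.1 h_range, h_card⟩)).symm⟩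

theorem exists_isDivisibleDesignCayley_zmod {G : Type*} [Group G]
    {ι : Multiplicative ((Fin s → ZMod 4) × ZMod 2) →* G} {b : G}
    (h : IsGeneralizedDihedral ι b) :
    ∃ (D : Set G) (C : G → Fin (2 ^ (s + 1 + 1))), IsDivisibleDesignCayley D C (2 ^ s)
      (2 ^ (2 * (s + 1)) - 2 ^ (s + 1) - 2 ^ s) (2 ^ (2 * (s + 1)) - 2 ^ (s + 1 + 1) - 2 ^ s)
      (2 * (2 ^ (s + 1) - 1) * (2 ^ s - 1)) := by
  obtain ⟨β, hβ, hker⟩ := exists_surjective_ker_eq_zmultiples_one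
    (GaloisField.finrank 2 (Nat.succ_ne_zero s))
  obtain ⟨e⟩ := TwistedProduct.nonempty_mulEquiv hβ hker
  have h_difference := TwistedProduct.isDivisibleDifferenceSet_horizontal hβ
  rw [card_ker_eq_two hker] at h_difference
  have h_vertical : Nat.card (TwistedProduct.vertical β) = 2 ^ s := by
    rw [TwistedProduct.card_vertical]
    simp
  have h_index : (TwistedProduct.vertical β).index = 2 * 2 ^ s := by
    rw [TwistedProduct.index_vertical, card_eq_two_pow_succ hβ hker, pow_succ']
  have h_design := (h.comp_mulEquiv e).exists_isDivisibleDesignCayley h_difference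
    (TwistedProduct.isComplement_vertical_horizontal β) h_vertical h_index
  have h_m : 4 * 2 ^ s = 2 ^ (s + 1 + 1) := by ring
  have h_v : 4 * (2 ^ s) ^ 2 = 2 ^ (2 * (s + 1)) := by ring
  have h_k : 2 ^ (2 * (s + 1)) - 3 * 2 ^ s = 2 ^ (2 * (s + 1)) - 2 ^ (s + 1) - 2 ^ s := by omega
  have h_l₁ : 2 ^ (2 * (s + 1)) - 5 * 2 ^ s = 2 ^ (2 * (s + 1)) - 2 ^ (s + 1 + 1) - 2 ^ s := by
    omega
  rwa [h_m, h_v, h_k, h_l₁, ← pow_succ'] at h_design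

end FiniteField

lemma commonNeighbor_parameters_ne {r : ℕ} (hr : 3 ≤ r) :
    2 ^ (2 * r) - 2 ^ (r + 1) - 2 ^ (r - 1) ≠ 2 * (2 ^ r - 1) * (2 ^ (r - 1) - 1) := by
  obtain ⟨s, rfl⟩ : ∃ s, r = s + 1 := ⟨r - 1, by omega⟩
  have h_four : 4 ≤ 2 ^ s := Nat.pow_le_pow_right two_pos (show 2 ≤ s by omega)
  have h_sq : 4 * 2 ^ s ≤ (2 ^ s) ^ 2 := by
    rw [sq]
    exact Nat.mul_le_mul_right _ h_four
  have h_v : 2 ^ (2 * (s + 1)) = 4 * (2 ^ s) ^ 2 := by ring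
  rw [Nat.add_sub_cancel, pow_succ' 2 s, ← four_mul_sq_add_two_sub (by omega), h_v]
  omega

/-- for `r ≥ 3` and `A = (ZMod 4)^(r−1) × ZMod 2`, the generalized
dihedral group `G = Dih(A)` carries a reversible identity-free subset `D'` such
that `Cay(G, D')` is a proper divisible design graph with parameters
`v = 2^(2r)`, `k = 2^(2r) − 2^r − 2^(r−1)`, `λ1 = 2^(2r) − 2^(r+1) − 2^(r−1)`,
`λ2 = 2(2^r−1)(2^(r−1)−1)`, `m = 2^(r+1)`, `n = 2^(r−1)`. -/
theorem dihedral_ddg_family_eq2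
    (r : ℕ) (hr : 3 ≤ r)
    (G : Type*) [Group G] [Fintype G]
    (ι : Multiplicative ((Fin (r - 1) → ZMod 4) × ZMod 2) →* G)
    (hinj : Function.Injective ι)
    (b : G) (hb2 : b * b = 1) (hb1 : b ≠ 1)
    (hbconj : ∀ a, b * ι a * b⁻¹ = ι a⁻¹)
    (hbnot : b ∉ Set.range ι)
    (hcardG : Fintype.card G
        = 2 * Fintype.card (Multiplicative ((Fin (r - 1) → ZMod 4) × ZMod 2)))
    (hdecomp : ∀ g : G, (∃ a, g = ι a) ∨ (∃ a, g = ι a * b)) :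
    ∃ (D' : Set G) (C : G → Fin (2 ^ (r + 1))),
      D'⁻¹ = D' ∧
      (1 : G) ∉ D' ∧
      Fintype.card G = 2 ^ (2 * r) ∧
      (∀ j : Fin (2 ^ (r + 1)), Nat.card {g : G // C g = j} = 2 ^ (r - 1)) ∧
      (∀ g : G, Nat.card {x : G // x * g⁻¹ ∈ D'}
          = 2 ^ (2 * r) - 2 ^ r - 2 ^ (r - 1)) ∧
      (∀ g h : G, g ≠ h → C g = C h →
        Nat.card {x : G // x * g⁻¹ ∈ D' ∧ x * h⁻¹ ∈ D'}
          = 2 ^ (2 * r) - 2 ^ (r + 1) - 2 ^ (r - 1)) ∧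
      (∀ g h : G, C g ≠ C h →
        Nat.card {x : G // x * g⁻¹ ∈ D' ∧ x * h⁻¹ ∈ D'}
          = 2 * (2 ^ r - 1) * (2 ^ (r - 1) - 1)) ∧
      2 ^ (2 * r) - 2 ^ (r + 1) - 2 ^ (r - 1) ≠ 2 * (2 ^ r - 1) * (2 ^ (r - 1) - 1) ∧
      1 < 2 ^ (r + 1) ∧ 1 < 2 ^ (r - 1) := by
  have h_dihedral : IsGeneralizedDihedral ι b := ⟨hinj, hb2, hbconj, hbnot, hdecomp⟩
  have h_r : r - 1 + 1 = r := by omega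
  have h_card : Fintype.card G = 2 ^ (2 * r) := by
    rw [hcardG, show 2 * r = 2 * (r - 1) + 1 + 1 by omega, pow_succ', pow_succ, pow_mul]
    simp [ZMod.card]
  have h_design := exists_isDivisibleDesignCayley_zmod h_dihedral
  rw [h_r] at h_design
  obtain ⟨D, C, hD⟩ := h_design
  exact ⟨D, C, hD.inv_eq, hD.one_notMem, h_card, hD.card_class, hD.card_neighbors,
    hD.card_common_of_eq, hD.card_common_of_ne, commonNeighbor_parameters_ne hr,
    Nat.one_lt_two_pow (by omega), Nat.one_lt_two_pow (by omega)⟩
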